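/- arXiv:1211.5879 — 4 statements merged into one kernel-verified Lean document; each statement's English description precedes it below -/
import Mathlib

section
/- Let S be an invertible symmetric n × n real matrix (n ≥ 1). The set {g : g is an n × n real matrix with gᵀ S g = S} is a compact subset of the space of n × n real matrices if and only if S is positive definite or negative definite. -/
open Matrix

namespace Matrix

variable {ι : Type*} [Fintype ι] [DecidableEq ι]

/-- A nonsingular symmetric real matrix that is not positive definite has a negative eigenvalue. -/
lemma exists_neg_eigenvector_of_not_posDef {A : Matrix ι ι ℝ} (hA : A.IsHermitian)
    (hdet : IsUnit A.det) (hpos : ¬ A.PosDef) :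
    ∃ (b : ℝ) (w : ι → ℝ), b < 0 ∧ w ⬝ᵥ w = 1 ∧ A *ᵥ w = b • w := by
  rw [hA.posDef_iff_eigenvalues_pos] at hpos
  push Not at hpos
  obtain ⟨i, hi⟩ := hpos
  have hne : hA.eigenvalues i ≠ 0 := by
    intro h
    apply hdet.ne_zero
    rw [hA.det_eq_prod_eigenvalues]
    exact Finset.prod_eq_zero (Finset.mem_univ i) (by simp [h])
  refine ⟨hA.eigenvalues i, hA.eigenvectorBasis i, lt_of_le_of_ne hi hne, ?_,
    hA.mulVec_eigenvectorBasis i⟩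
  have h := hA.eigenvectorBasis.inner_eq_one i
  rwa [EuclideanSpace.inner_eq_star_dotProduct, star_trivial] at h

/-- The reflection along an anisotropic vector `v` preserves the symmetric form `S`. -/
lemma transpose_reflection_mul_mul {S : Matrix ι ι ℝ} (hsymm : Sᵀ = S) {v : ι → ℝ}
    (hv : v ⬝ᵥ S *ᵥ v ≠ 0) :
    (1 - (2 / (v ⬝ᵥ S *ᵥ v)) • vecMulVec v (S *ᵥ v))ᵀ * S *
      (1 - (2 / (v ⬝ᵥ S *ᵥ v)) • vecMulVec v (S *ᵥ v)) = S := by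
  have hvec : v ᵥ* S = S *ᵥ v := by rw [← mulVec_transpose, hsymm]
  have hcomm : (S *ᵥ v) ⬝ᵥ v = v ⬝ᵥ S *ᵥ v := dotProduct_comm _ _
  generalize v ⬝ᵥ S *ᵥ v = q at *
  simp only [transpose_sub, transpose_one, transpose_smul, transpose_vecMulVec, sub_mul, mul_sub,
    one_mul, mul_one, smul_mul_assoc, mul_smul_comm, vecMulVec_mul, mul_vecMulVec,
    vecMulVec_mulVec, hvec]
  ext i j
  simp [vecMulVec_apply, hcomm]
  field_simp
  ring

open scoped MatrixOrder in
/-- A positive definite real matrix is the Gram matrix of the columns of a nonsingular matrix. -/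
lemma PosDef.exists_eq_transpose_mul_self {S : Matrix ι ι ℝ} (hS : S.PosDef) :
    ∃ B : Matrix ι ι ℝ, IsUnit B.det ∧ S = Bᵀ * B := by
  obtain ⟨B, hB⟩ := CStarAlgebra.nonneg_iff_eq_star_mul_self.mp hS.posSemidef.nonneg
  rw [star_eq_conjTranspose, conjTranspose_eq_transpose_of_trivial] at hB
  refine ⟨B, ?_, hB⟩
  have hdet := (isUnit_iff_isUnit_det S).mp hS.isUnit
  rw [hB, det_mul] at hdet
  exact isUnit_of_mul_isUnit_right hdet

/-- The isometry group of a positive definite real form is compact. -/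
lemma PosDef.isCompact_isometries {S : Matrix ι ι ℝ} (hS : S.PosDef) :
    IsCompact {g : Matrix ι ι ℝ | gᵀ * S * g = S} := by
  obtain ⟨B, hBdet, hBS⟩ := hS.exists_eq_transpose_mul_self
  have hcompact : IsCompact {h : Matrix ι ι ℝ | hᵀ * h = S} := by
    refine IsCompact.of_isClosed_subset
      (isCompact_univ_pi fun _ => isCompact_univ_pi fun j =>
        isCompact_Icc (a := -(1 + S j j)) (b := 1 + S j j))
      (isClosed_eq (by fun_prop) continuous_const) ?_
    rintro h rfl i - j -
    have hle : h i j ^ 2 ≤ (hᵀ * h) j j := by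
      simp only [mul_apply, transpose_apply, ← sq]
      exact Finset.single_le_sum (f := fun k => h k j ^ 2) (fun k _ => sq_nonneg _)
        (Finset.mem_univ i)
    constructor <;> nlinarith [sq_nonneg (h i j - 1), sq_nonneg (h i j + 1)]
  have himage : {g : Matrix ι ι ℝ | gᵀ * S * g = S} =
      (fun h => B⁻¹ * h) '' {h : Matrix ι ι ℝ | hᵀ * h = S} := by
    ext g
    constructor
    · intro hg
      refine ⟨B * g, ?_, by simp [← mul_assoc, nonsing_inv_mul B hBdet]⟩
      calc (B * g)ᵀ * (B * g) = gᵀ * S * g := by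
            rw [hBS, transpose_mul]; simp only [mul_assoc]
        _ = S := hg
    · rintro ⟨h, hh, rfl⟩
      have hBh : B * (B⁻¹ * h) = h := by simp [← mul_assoc, mul_nonsing_inv B hBdet]
      calc (B⁻¹ * h)ᵀ * S * (B⁻¹ * h) = (B * (B⁻¹ * h))ᵀ * (B * (B⁻¹ * h)) := by
            rw [hBS, transpose_mul B]; simp only [mul_assoc]
        _ = S := by rw [hBh]; exact hh
  rw [himage]
  exact hcompact.image (by fun_prop)

/-- The isometry group of a real form with eigenvalues of both signs is not compact. -/
lemma not_isCompact_isometries_of_eigenvectors {S : Matrix ι ι ℝ} (hsymm : Sᵀ = S) {a b : ℝ}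
    {u w : ι → ℝ} (ha : 0 < a) (hb : b < 0) (hu : u ⬝ᵥ u = 1) (hw : w ⬝ᵥ w = 1)
    (hSu : S *ᵥ u = a • u) (hSw : S *ᵥ w = b • w) :
    ¬ IsCompact {g : Matrix ι ι ℝ | gᵀ * S * g = S} := by
  intro hcompact
  have huw : u ⬝ᵥ w = 0 := by
    have h : u ⬝ᵥ S *ᵥ w = S *ᵥ u ⬝ᵥ w := by
      rw [dotProduct_mulVec, ← mulVec_transpose, hsymm]
    rw [hSu, hSw, dotProduct_smul, smul_dotProduct, smul_eq_mul, smul_eq_mul] at h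
    have h0 : (a - b) * (u ⬝ᵥ w) = 0 := by linarith
    exact (mul_eq_zero.mp h0).resolve_left (by linarith)
  have hwu : w ⬝ᵥ u = 0 := by rw [dotProduct_comm, huw]
  obtain ⟨C, hC⟩ := hcompact.bddBelow_image
    (f := fun g : Matrix ι ι ℝ => u ⬝ᵥ g *ᵥ u) (by fun_prop)
  -- As `δ → 0⁺`, the vector `√(δ - b) u + √a w` tends to an isotropic vector.
  have hlarge : ∀ δ : ℝ, 0 < δ → C ≤ 1 - 2 * (δ - b) / δ := by
    intro δ hδ
    set x := √(δ - b)
    set y := √a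
    have hx : x ^ 2 = δ - b := Real.sq_sqrt (by linarith)
    have hy : y ^ 2 = a := Real.sq_sqrt ha.le
    set v := x • u + y • w with hv
    have hSv : S *ᵥ v = (x * a) • u + (y * b) • w := by
      rw [hv, mulVec_add, mulVec_smul, mulVec_smul, hSu, hSw, smul_smul, smul_smul]
    have hq : v ⬝ᵥ S *ᵥ v = a * δ := by
      rw [hSv, hv]
      simp only [add_dotProduct, dotProduct_add, smul_dotProduct, dotProduct_smul, smul_eq_mul,
        hu, hw, huw, hwu]
      linear_combination a * hx + b * hy
    have hq0 : v ⬝ᵥ S *ᵥ v ≠ 0 := by rw [hq]; positivity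
    have huv : u ⬝ᵥ v = x := by simp [hv, hu, huw]
    have hSvu : S *ᵥ v ⬝ᵥ u = x * a := by simp [hSv, hu, hwu]
    have h := hC ⟨_, transpose_reflection_mul_mul hsymm hq0, rfl⟩
    refine h.trans_eq ?_
    simp only [sub_mulVec, one_mulVec, smul_mulVec, vecMulVec_mulVec, dotProduct_sub,
      dotProduct_smul, hu, hSvu, huv, hq, op_smul_eq_smul, smul_eq_mul]
    rw [← hx]
    field_simp
  have h := hlarge (-b / (|C| + 1)) (div_pos (by linarith) (by positivity))
  have hval : 1 - 2 * (-b / (|C| + 1) - b) / (-b / (|C| + 1)) = -1 - 2 * (|C| + 1) := by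
    have hC0 : |C| + 1 ≠ 0 := by positivity
    have hb0 : b ≠ 0 := hb.ne
    field_simp
    ring
  rw [hval] at h
  linarith [neg_abs_le C, abs_nonneg C]

end Matrix

/-- For an invertible symmetric real matrix `S`, the "orthogonal group"
`{g | gᵀ S g = S}` is compact iff `S` is positive definite or negative
definite.  (Compactness of the stabilizer of the generic character `χ_S`.) -/
theorem isCompact_orthogonalGroup_iff_definite
    {n : ℕ} (hn : 1 ≤ n) (S : Matrix (Fin n) (Fin n) ℝ)
    (hsymm : Sᵀ = S) (hinv : IsUnit S.det) :
    IsCompact {g : Matrix (Fin n) (Fin n) ℝ | gᵀ * S * g = S} ↔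
      (S.PosDef ∨ (-S).PosDef) := by
  have hherm : S.IsHermitian := by
    rw [IsHermitian, conjTranspose_eq_transpose_of_trivial, hsymm]
  constructor
  · contrapose!
    rintro ⟨hpos, hneg⟩
    obtain ⟨b, w, hb, hw, hSw⟩ := exists_neg_eigenvector_of_not_posDef hherm hinv hpos
    have hinv' : IsUnit (-S).det := by
      rw [← isUnit_iff_isUnit_det] at hinv ⊢
      exact hinv.neg
    obtain ⟨a, u, ha, hu, hSu⟩ := exists_neg_eigenvector_of_not_posDef hherm.neg hinv' hneg
    refine not_isCompact_isometries_of_eigenvectors hsymm (neg_pos.mpr ha) hb hu hw ?_ hSw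
    rw [neg_smul, ← hSu, neg_mulVec, neg_neg]
  · rintro (hpos | hneg)
    · exact hpos.isCompact_isometries
    · simpa using hneg.isCompact_isometries
end

section
/- Let S be a symmetric n × n real matrix (n ≥ 1). The orbit {g S gᵀ : g ∈ GL(n,ℝ)} is an open subset of the real vector space of symmetric n × n matrices if and only if S is invertible. -/
open Matrix

section SymmetricOrbit

open Filter Topology

attribute [local instance] Matrix.linftyOpNormedRing Matrix.linftyOpNormedAlgebra

/-- Every symmetric matrix close to an invertible symmetric matrix `X` has the form `M * X⁻¹ * M`
with `M` symmetric. -/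
theorem Matrix.eventually_exists_mul_inv_mul_eq {n : ℕ} {X : Matrix (Fin n) (Fin n) ℝ}
    (hsymm : Xᵀ = X) (hX : IsUnit X.det) :
    ∀ᶠ Y in 𝓝 X, Yᵀ = Y → ∃ M : Matrix (Fin n) (Fin n) ℝ, Mᵀ = M ∧ M * X⁻¹ * M = Y := by
  have : CompleteSpace (Matrix (Fin n) (Fin n) ℝ) := FiniteDimensional.complete ℝ _
  let F : Matrix (Fin n) (Fin n) ℝ → Matrix (Fin n) (Fin n) ℝ := fun M => M * X⁻¹ * M
  have hFX : F X = X := by simp [F, Matrix.mul_nonsing_inv _ hX]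
  let e : Matrix (Fin n) (Fin n) ℝ ≃L[ℝ] Matrix (Fin n) (Fin n) ℝ :=
    ContinuousLinearEquiv.smulLeft (Units.mk0 (2 : ℝ) two_ne_zero)
  have hF : HasStrictFDerivAt F (e : Matrix (Fin n) (Fin n) ℝ →L[ℝ] _) X := by
    have hid := hasStrictFDerivAt_id (𝕜 := ℝ) X
    refine ((hid.mul_const' X⁻¹).mul' hid).congr_fderiv ?_
    ext1 K
    change X * X⁻¹ * K + K * X⁻¹ * X = (2 : ℝ) • K
    rw [Matrix.mul_nonsing_inv _ hX, Matrix.nonsing_inv_mul_cancel_right _ _ hX, Matrix.one_mul,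
      two_smul]
  let G := hF.localInverse F e X
  have hGX : G X = X := by
    have h := hF.localInverse_apply_image
    rwa [hFX] at h
  have hG : Tendsto G (𝓝 X) (𝓝 X) := by
    have h := hF.localInverse_continuousAt
    rw [hFX] at h
    have h' : Tendsto G (𝓝 X) (𝓝 (G X)) := h
    rwa [hGX] at h'
  have hGT : Tendsto (fun Y => (G Y)ᵀ) (𝓝 X) (𝓝 X) := by
    have h : Tendsto (fun M : Matrix (Fin n) (Fin n) ℝ => Mᵀ) (𝓝 X) (𝓝 Xᵀ) :=
      (continuous_id.matrix_transpose).tendsto X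
    rw [hsymm] at h
    exact h.comp hG
  have hr : ∀ᶠ Y in 𝓝 X, F (G Y) = Y := by
    have h := hF.eventually_right_inverse
    rwa [hFX] at h
  filter_upwards [hr, hGT.eventually hF.eventually_left_inverse] with Y hY hl hYs
  refine ⟨G Y, ?_, hY⟩
  have hFT : F (G Y)ᵀ = Y := by
    calc F (G Y)ᵀ = (F (G Y))ᵀ := by
          simp [F, Matrix.transpose_mul, Matrix.transpose_nonsing_inv, hsymm, Matrix.mul_assoc]
      _ = Y := by rw [hY, hYs]
  rw [hFT] at hl
  exact hl.symm

/-- Every symmetric matrix close to an invertible symmetric matrix `X` is congruent to `X`. -/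
theorem Matrix.eventually_exists_congruent {n : ℕ} {X : Matrix (Fin n) (Fin n) ℝ}
    (hsymm : Xᵀ = X) (hX : IsUnit X.det) :
    ∀ᶠ Y in 𝓝 X, Yᵀ = Y → ∃ g : GL (Fin n) ℝ,
      Y = (g : Matrix (Fin n) (Fin n) ℝ) * X * (g : Matrix (Fin n) (Fin n) ℝ)ᵀ := by
  have hdet : ∀ᶠ Y : Matrix (Fin n) (Fin n) ℝ in 𝓝 X, Y.det ≠ 0 :=
    (continuous_id.matrix_det).continuousAt.eventually_ne hX.ne_zero
  filter_upwards [Matrix.eventually_exists_mul_inv_mul_eq hsymm hX, hdet] with Y hY hYd hYs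
  obtain ⟨M, hMs, rfl⟩ := hY hYs
  have hg : (M * X⁻¹).det ≠ 0 := by
    rw [Matrix.det_mul] at hYd
    exact left_ne_zero_of_mul hYd
  refine ⟨Matrix.GeneralLinearGroup.mkOfDetNeZero _ hg, ?_⟩
  change M * X⁻¹ * M = M * X⁻¹ * X * (M * X⁻¹)ᵀ
  rw [Matrix.nonsing_inv_mul_cancel_right _ _ hX, Matrix.transpose_mul,
    Matrix.transpose_nonsing_inv, hsymm, hMs, Matrix.mul_assoc]

end SymmetricOrbit

/-- The matrices `S + t • 1` are invertible for `t` arbitrarily close to `0`. -/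
theorem Matrix.frequently_det_add_smul_one_ne_zero {n : ℕ} (S : Matrix (Fin n) (Fin n) ℝ) :
    ∃ᶠ t : ℝ in nhds 0, (S + t • (1 : Matrix (Fin n) (Fin n) ℝ)).det ≠ 0 := by
  have hfin : {t : ℝ | (-S).charpoly.IsRoot t}.Finite :=
    Polynomial.finite_setOfPred_isRoot (Matrix.charpoly_monic _).ne_zero
  have hdense : Dense {t : ℝ | (-S).charpoly.IsRoot t}ᶜ := hfin.countable.dense_compl ℝ
  refine (mem_closure_iff_frequently.mp (hdense 0)).mono fun t ht h => ht ?_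
  change Polynomial.eval t _ = 0
  rw [Matrix.eval_charpoly, ← h, sub_neg_eq_add, add_comm, Matrix.smul_one_eq_diagonal]
  rfl

/-- A symmetric real matrix `S` has open `GL(n,ℝ)`-orbit `{g S gᵀ}` in the
space of symmetric matrices iff `S` is invertible.  (Characterization of the
generic characters of the abelian unipotent radical of the Siegel parabolic
of `Sp(n,ℝ)`.) -/
theorem isOpen_orbit_iff_isUnit_det
    {n : ℕ} (hn : 1 ≤ n) (S : Matrix (Fin n) (Fin n) ℝ) (hsymm : Sᵀ = S) :
    IsOpen {X : {X : Matrix (Fin n) (Fin n) ℝ // Xᵀ = X} |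
        ∃ g : Matrix.GeneralLinearGroup (Fin n) ℝ,
          (X : Matrix (Fin n) (Fin n) ℝ) = (g : Matrix (Fin n) (Fin n) ℝ) * S *
            (g : Matrix (Fin n) (Fin n) ℝ)ᵀ} ↔
      IsUnit S.det := by
  constructor
  · intro hopen
    let f : ℝ → {X : Matrix (Fin n) (Fin n) ℝ // Xᵀ = X} := fun t =>
      ⟨S + t • 1, by simp [hsymm]⟩
    have hf : Continuous f := by
      refine Continuous.subtype_mk ?_ _
      fun_prop
    have hev := (hopen.preimage hf).mem_nhds (x := 0) ⟨1, by simp [f]⟩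
    obtain ⟨t, hdet, g, hg⟩ :=
      ((Matrix.frequently_det_add_smul_one_ne_zero S).and_eventually hev).exists
    change S + t • 1 = _ at hg
    rw [hg, Matrix.det_mul, Matrix.det_mul] at hdet
    exact (right_ne_zero_of_mul (left_ne_zero_of_mul hdet)).isUnit
  · intro hS
    rw [isOpen_iff_mem_nhds]
    rintro ⟨X, hXs⟩ ⟨g, hg⟩
    change X = _ at hg
    have hX : IsUnit X.det := by
      have hgd : IsUnit (g : Matrix (Fin n) (Fin n) ℝ).det :=
        (Matrix.isUnit_iff_isUnit_det _).mp g.isUnit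
      rw [hg, Matrix.det_mul, Matrix.det_mul, Matrix.det_transpose]
      exact (hgd.mul hS).mul hgd
    have hev := continuous_subtype_val.continuousAt (x := (⟨X, hXs⟩ :
      {X : Matrix (Fin n) (Fin n) ℝ // Xᵀ = X})) |>.eventually
        (Matrix.eventually_exists_congruent hXs hX)
    filter_upwards [hev] with Y hY
    obtain ⟨h, hh⟩ := hY Y.2
    refine ⟨h * g, ?_⟩
    rw [hh, hg, Units.val_mul, Matrix.transpose_mul]
    simp only [Matrix.mul_assoc]
end

section
/- Let n ≥ 1 and let e₁, …, eₙ be the standard basis of ℝⁿ. Set Φ⁺ = {e_i − e_j : 1 ≤ i < j ≤ n} ∪ {e_i + e_j : 1 ≤ i ≤ j ≤ n} (so in particular 2e_i ∈ Φ⁺). Let w : ℝⁿ → ℝⁿ be a linear automorphism which is a signed permutation, i.e. for every i there are an index σ(i) and a sign η(i) ∈ {1, −1} with w(e_i) = η(i) e_{σ(i)}. Suppose that (a) w(e_i − e_j) ∈ Φ⁺ for all i < j, and (b) for every i, w⁻¹(e_i) ∈ {−e₁, …, −eₙ}. Then w(e_i) = −e_{n+1−i} for all i. -/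
noncomputable section

/-- The standard basis vector `eᵢ` of `ℝⁿ`. -/
def stdVec (n : ℕ) (i : Fin n) : Fin n → ℝ := Pi.single i 1

/-- The positive roots of type `Cₙ`:
`Φ⁺ = {eᵢ − eⱼ : i < j} ∪ {eᵢ + eⱼ : i ≤ j}`. -/
def typeCPos (n : ℕ) : Set (Fin n → ℝ) :=
  {v | ∃ i j : Fin n, i < j ∧ v = stdVec n i - stdVec n j} ∪
    {v | ∃ i j : Fin n, i ≤ j ∧ v = stdVec n i + stdVec n j}

/-- A difference `eₐ − e_b` is a positive root of type `Cₙ` only if `a < b`. -/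
theorem lt_of_stdVec_sub_mem_typeCPos {n : ℕ} {a b : Fin n}
    (h : stdVec n a - stdVec n b ∈ typeCPos n) : a < b := by
  rcases h with ⟨p, q, hpq, h⟩ | ⟨p, q, -, h⟩
  · have hp := congrFun h p
    have hq := congrFun h q
    simp only [stdVec, Pi.sub_apply, Pi.single_apply] at hp hq
    grind
  · have hsum := congrArg (fun v : Fin n → ℝ => ∑ i, v i) h
    norm_num [stdVec, Finset.sum_sub_distrib, Finset.sum_add_distrib] at hsum

/-- Standard basis vectors are never negatives of standard basis vectors. -/
theorem stdVec_ne_neg_stdVec {n : ℕ} (a b : Fin n) : stdVec n a ≠ -stdVec n b := by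
  intro h
  have ha := congrFun h a
  simp only [stdVec, Pi.neg_apply, Pi.single_apply] at ha
  grind

/-- A strictly decreasing self-map of `Fin n` is the order reversal. -/
theorem StrictAnti.eq_finRev {n : ℕ} {f : Fin n → Fin n} (hf : StrictAnti f) : f = Fin.rev := by
  have hmono : StrictMono (Fin.rev ∘ f) := Fin.rev_strictAnti.comp hf
  have hid : Fin.rev ∘ f = id := by
    refine (hmono.range_inj strictMono_id).1 ?_
    rw [(Finite.surjective_of_injective hmono.injective).range_eq, Set.range_id]
  funext i
  rw [← Fin.rev_rev (f i)]
  exact congrArg Fin.rev (congrFun hid i)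

/-- Combinatorial core of the identification of the distinguished Weyl group
element `v^M`: a signed permutation `w` sending all `eᵢ − eⱼ` (`i < j`) into
`Φ⁺` and with `w⁻¹(eᵢ)` a negative standard basis vector for every `i` must be
`w(eᵢ) = −e_{n+1−i}`. -/
theorem signed_permutation_longest_element
    (n : ℕ) (hn : 1 ≤ n)
    (w : (Fin n → ℝ) ≃ₗ[ℝ] (Fin n → ℝ))
    (hsigned : ∀ i : Fin n, ∃ (j : Fin n) (η : ℝ),
      (η = 1 ∨ η = -1) ∧ w (stdVec n i) = η • stdVec n j)
    (ha : ∀ i j : Fin n, i < j → w (stdVec n i - stdVec n j) ∈ typeCPos n)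
    (hb : ∀ i : Fin n, ∃ j : Fin n, w.symm (stdVec n i) = -stdVec n j) :
    ∀ i : Fin n, w (stdVec n i) = -stdVec n (Fin.rev i) := by
  have hneg : ∀ i, ∃ j, w (stdVec n i) = -stdVec n j := by
    intro i
    obtain ⟨j, η, rfl | rfl, h⟩ := hsigned i
    · obtain ⟨k, hk⟩ := hb j
      rw [one_smul] at h
      rw [← h, w.symm_apply_apply] at hk
      exact absurd hk (stdVec_ne_neg_stdVec i k)
    · exact ⟨j, by rw [h, neg_one_smul]⟩
  choose σ hσ using hneg
  have hanti : StrictAnti σ := by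
    intro i j hij
    apply lt_of_stdVec_sub_mem_typeCPos
    have h := ha i j hij
    rwa [map_sub, hσ, hσ, neg_sub_neg] at h
  intro i
  rw [hσ, hanti.eq_finRev]

end
end

section
/- Let n ≥ 1 and let p ∈ ℂ[x₁, …, xₙ] be a homogeneous polynomial of degree k. Then p can be written in exactly one way as p = Σ_{0 ≤ j ≤ k/2} (r²)^j · h_j, where each h_j is a harmonic polynomial (Δh_j = 0) that is homogeneous of degree k − 2j (or zero). Equivalently, ℂ[x₁, …, xₙ] ≅ ⨁_{k ≥ 0} H^k ⊗ ℂ[r²], where H^k is the space of harmonic homogeneous polynomials of degree k. -/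
open MvPolynomial

section Laplacian

variable {σ R : Type*} [Fintype σ]

/-- The Laplace operator `∑ i, ∂²/∂xᵢ²` on polynomials. -/
noncomputable def polyLaplacian (σ R : Type*) [Fintype σ] [CommRing R] :
    MvPolynomial σ R →ₗ[R] MvPolynomial σ R :=
  ∑ i, (pderiv i).toLinearMap ∘ₗ (pderiv i).toLinearMap

/-- The polynomial `r² = ∑ i, xᵢ²`. -/
noncomputable def radiusSq (σ R : Type*) [Fintype σ] [CommRing R] : MvPolynomial σ R :=
  ∑ i, X i ^ 2

section CommRing

variable [CommRing R]

lemma polyLaplacian_apply (p : MvPolynomial σ R) :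
    polyLaplacian σ R p = ∑ i, pderiv i (pderiv i p) := by
  simp [polyLaplacian]

lemma isHomogeneous_radiusSq : (radiusSq σ R).IsHomogeneous 2 :=
  .sum _ _ _ fun i _ => isHomogeneous_X_pow i 2

lemma pderiv_radiusSq (i : σ) : pderiv i (radiusSq σ R) = 2 * X i := by
  classical
  simp [radiusSq, pderiv_X, Pi.single_apply, Derivation.leibniz_pow]

lemma MvPolynomial.IsHomogeneous.polyLaplacian {p : MvPolynomial σ R} {k : ℕ}
    (hp : p.IsHomogeneous k) : (polyLaplacian σ R p).IsHomogeneous (k - 2) := by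
  rw [polyLaplacian_apply]
  exact .sum _ _ _ fun i _ => hp.pderiv.pderiv

lemma polyLaplacian_eq_zero_of_lt_two {p : MvPolynomial σ R} {k : ℕ}
    (hp : p.IsHomogeneous k) (hk : k < 2) : polyLaplacian σ R p = 0 := by
  rw [polyLaplacian_apply]
  refine Finset.sum_eq_zero fun i _ => ?_
  have hi : (pderiv i p).IsHomogeneous 0 := by
    simpa [show k - 1 = 0 by omega] using hp.pderiv (i := i)
  rw [totalDegree_eq_zero_iff_eq_C.mp ((totalDegree_zero_iff_isHomogeneous _).mpr hi), pderiv_C]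

lemma polyLaplacian_radiusSq_mul {q : MvPolynomial σ R} {d : ℕ} (hq : q.IsHomogeneous d) :
    polyLaplacian σ R (radiusSq σ R * q) =
      radiusSq σ R * polyLaplacian σ R q + ((2 * Fintype.card σ + 4 * d : ℕ) : R) • q := by
  have euler : ∑ i, X i * pderiv i q = d • q := hq.sum_X_mul_pderiv
  have term (i : σ) : pderiv i (pderiv i (radiusSq σ R * q)) =
      radiusSq σ R * pderiv i (pderiv i q) + 4 * (X i * pderiv i q) + 2 * q := by
    have two : pderiv i (2 : MvPolynomial σ R) = 0 := by
      simpa using (pderiv i : Derivation R (MvPolynomial σ R) _).map_natCast 2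
    simp only [pderiv_mul, map_add, pderiv_radiusSq, pderiv_X_self, two]
    ring
  simp only [polyLaplacian_apply, term, Finset.sum_add_distrib, ← Finset.mul_sum, euler]
  rw [Nat.cast_smul_eq_nsmul, Finset.sum_const, Finset.card_univ]
  simp only [nsmul_eq_mul]
  push_cast
  ring

lemma polyLaplacian_radiusSq_pow_mul {h : MvPolynomial σ R} {d : ℕ}
    (hd : h.IsHomogeneous d) (hh : polyLaplacian σ R h = 0) (j : ℕ) :
    polyLaplacian σ R (radiusSq σ R ^ (j + 1) * h) =
      ((2 * (j + 1) * (Fintype.card σ + 2 * d + 2 * j) : ℕ) : R) •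
        (radiusSq σ R ^ j * h) := by
  induction j with
  | zero =>
    rw [zero_add, pow_one, polyLaplacian_radiusSq_mul hd, hh, mul_zero, zero_add, pow_zero, one_mul]
    congr 2
    ring
  | succ j ih =>
    have hom := (isHomogeneous_radiusSq (σ := σ) (R := R)).pow (j + 1) |>.mul hd
    rw [pow_succ' _ (j + 1), mul_assoc, polyLaplacian_radiusSq_mul hom, ih, mul_smul_comm,
      ← mul_assoc, ← pow_succ', ← add_smul, ← Nat.cast_add]
    congr 2
    ring

end CommRing

section Field

variable {K : Type*} [Field K] [CharZero K] [Nonempty σ]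

lemma laplacian_coeff_ne_zero (j d : ℕ) :
    ((2 * (j + 1) * (Fintype.card σ + 2 * d + 2 * j) : ℕ) : K) ≠ 0 := by
  have := Fintype.card_pos (α := σ)
  exact Nat.cast_ne_zero.mpr (by positivity)

/-- Harmonic homogeneous polynomials are linearly independent over `K[r²]`, in the sense that
a vanishing sum of multiples of distinct powers of `r²` has vanishing terms. -/
lemma eq_zero_of_sum_radiusSq_pow_mul_eq_zero (m : ℕ) (e : ℕ → ℕ) (h : ℕ → MvPolynomial σ K)
    (harm : ∀ j, polyLaplacian σ K (h j) = 0) (hom : ∀ j, (h j).IsHomogeneous (e j))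
    (hsum : ∑ j ∈ Finset.range m, radiusSq σ K ^ j * h j = 0) :
    ∀ j < m, h j = 0 := by
  induction m generalizing e h with
  | zero => simp
  | succ m ih =>
    let c (j : ℕ) : K := ((2 * (j + 1) * (Fintype.card σ + 2 * e (j + 1) + 2 * j) : ℕ) : K)
    have hc (j : ℕ) : c j ≠ 0 := laplacian_coeff_ne_zero (σ := σ) j (e (j + 1))
    have tail (j : ℕ) (hj : j < m) : h (j + 1) = 0 := by
      refine (smul_eq_zero_iff_right (hc j)).mp
        (ih (fun j => e (j + 1)) (fun j => c j • h (j + 1)) (fun j => ?_) (fun j => ?_) ?_ j hj)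
      · rw [map_smul, harm, smul_zero]
      · rw [smul_eq_C_mul]
        exact (hom _).C_mul _
      · have := congrArg (polyLaplacian σ K) hsum
        rw [Finset.sum_range_succ', map_add, map_sum, pow_zero, one_mul, harm, add_zero,
          map_zero] at this
        rw [← this]
        refine Finset.sum_congr rfl fun j _ => ?_
        rw [polyLaplacian_radiusSq_pow_mul (hom _) (harm _), mul_smul_comm]
    rintro (_ | j) hj
    · rw [Finset.sum_range_succ', Finset.sum_eq_zero, zero_add, pow_zero, one_mul] at hsum
      · exact hsum
      · intro j hj
        rw [tail j (Finset.mem_range.mp hj), mul_zero]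
    · exact tail j (by omega)

lemma exists_harmonic_decomposition (k : ℕ) (p : MvPolynomial σ K) (hp : p.IsHomogeneous k) :
    ∃ h : ℕ → MvPolynomial σ K,
      (∀ j, polyLaplacian σ K (h j) = 0) ∧
      (∀ j, (h j).IsHomogeneous (k - 2 * j)) ∧
      (∀ j, k < 2 * j → h j = 0) ∧
      p = ∑ j ∈ Finset.range (k / 2 + 1), radiusSq σ K ^ j * h j := by
  induction k using Nat.strong_induction_on generalizing p with
  | _ k ih =>
  obtain hk | hk := lt_or_ge k 2
  · refine ⟨fun j => if j = 0 then p else 0, fun j => ?_, fun j => ?_, fun j hj => ?_, ?_⟩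
    · dsimp only
      split_ifs
      exacts [polyLaplacian_eq_zero_of_lt_two hp hk, map_zero _]
    · dsimp only
      split_ifs with hj
      · simpa [hj] using hp
      · exact isHomogeneous_zero _ _ _
    · exact if_neg (by omega)
    · simp [Nat.div_eq_of_lt hk]
  obtain ⟨k, rfl⟩ := Nat.exists_eq_add_of_le' hk
  obtain ⟨h, harm, hom, hzero, hsum⟩ := ih k (by omega) _ hp.polyLaplacian
  let c (j : ℕ) : K := ((2 * (j + 1) * (Fintype.card σ + 2 * (k - 2 * j) + 2 * j) : ℕ) : K)
  have hc (j : ℕ) : c j ≠ 0 := laplacian_coeff_ne_zero (σ := σ) j (k - 2 * j)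
  let g (j : ℕ) : MvPolynomial σ K := (c j)⁻¹ • h j
  have gharm (j : ℕ) : polyLaplacian σ K (g j) = 0 := by rw [map_smul, harm, smul_zero]
  have ghom (j : ℕ) : (g j).IsHomogeneous (k - 2 * j) := by
    simpa only [g, smul_eq_C_mul] using (hom j).C_mul _
  have gzero (j : ℕ) (hj : k < 2 * j) : g j = 0 := by simp only [g, hzero j hj, smul_zero]
  let q := ∑ j ∈ Finset.range (k / 2 + 1), radiusSq σ K ^ (j + 1) * g j
  have hq : polyLaplacian σ K q = polyLaplacian σ K p := by
    rw [hsum, map_sum]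
    refine Finset.sum_congr rfl fun j _ => ?_
    rw [polyLaplacian_radiusSq_pow_mul (ghom j) (gharm j), ← mul_smul_comm]
    exact congrArg _ (smul_inv_smul₀ (hc j) _)
  have qhom : q.IsHomogeneous (k + 2) := by
    refine .sum _ _ _ fun j hj => ?_
    have hj' := Finset.mem_range.mp hj
    have := (isHomogeneous_radiusSq (σ := σ) (R := K)).pow (j + 1) |>.mul (ghom j)
    rwa [show 2 * (j + 1) + (k - 2 * j) = k + 2 by omega] at this
  refine ⟨fun j => Nat.casesOn j (p - q) g, ?_, ?_, ?_, ?_⟩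
  · rintro (_ | j)
    · change polyLaplacian σ K (p - q) = 0
      rw [map_sub, hq, sub_self]
    · exact gharm j
  · rintro (_ | j)
    · exact hp.sub qhom
    · have := ghom j
      rwa [show k - 2 * j = k + 2 - 2 * (j + 1) by omega] at this
  · rintro (_ | j) hj
    · omega
    · exact gzero j (by omega)
  · rw [show (k + 2) / 2 + 1 = k / 2 + 1 + 1 by omega, Finset.sum_range_succ']
    change p = q + radiusSq σ K ^ 0 * (p - q)
    ring

end Field

end Laplacian

/-- Every homogeneous polynomial `p` of degree `k` in `ℂ[x₁,…,xₙ]` can be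
written in exactly one way as `p = Σ_{0 ≤ j ≤ k/2} (r²)ʲ · hⱼ` with each `hⱼ`
harmonic and homogeneous of degree `k − 2j` (or zero). -/
theorem harmonic_decomposition
    (n : ℕ) (hn : 1 ≤ n) (k : ℕ)
    (p : MvPolynomial (Fin n) ℂ) (hp : p.IsHomogeneous k) :
    ∃! h : ℕ → MvPolynomial (Fin n) ℂ,
      (∀ j, (∑ i : Fin n, pderiv i (pderiv i (h j))) = 0) ∧
      (∀ j, h j = 0 ∨ (h j).IsHomogeneous (k - 2 * j)) ∧
      (∀ j, k < 2 * j → h j = 0) ∧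
      p = ∑ j ∈ Finset.range (k / 2 + 1),
            (∑ i : Fin n, (X i : MvPolynomial (Fin n) ℂ) ^ 2) ^ j * h j := by
  have : Nonempty (Fin n) := ⟨⟨0, hn⟩⟩
  simp only [← polyLaplacian_apply]
  obtain ⟨h, harm, hom, hzero, hsum⟩ := exists_harmonic_decomposition k p hp
  refine ⟨h, ⟨harm, fun j => .inr (hom j), hzero, hsum⟩, ?_⟩
  rintro g ⟨gharm, ghom, gzero, gsum⟩
  have ghom' (j : ℕ) : (g j).IsHomogeneous (k - 2 * j) :=
    (ghom j).elim (fun hj => hj ▸ isHomogeneous_zero _ _ _) id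
  funext j
  obtain hj | hj := lt_or_ge k (2 * j)
  · rw [gzero j hj, hzero j hj]
  refine sub_eq_zero.mp (eq_zero_of_sum_radiusSq_pow_mul_eq_zero (k / 2 + 1)
    (fun j => k - 2 * j) (fun j => g j - h j) (fun j => ?_) (fun j => (ghom' j).sub (hom j)) ?_
    j (by omega))
  · rw [map_sub, gharm, harm, sub_self]
  · simp only [mul_sub, Finset.sum_sub_distrib]
    exact sub_eq_zero.mpr (gsum.symm.trans hsum)
end
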